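/- arXiv:2602.11486 — 2 statements merged into one kernel-verified Lean document; each statement's English description precedes it below -/
import Mathlib

section
/- For every integer k ≥ 2, every z ∈ [5/6, 11/12], every w ∈ (0, 1/48], and every Lebesgue-measurable set S ⊆ [0,1]: |∫_S σ₀^k(x) dx − ∫_S σ_{w;z}^k(x) dx| ≤ 2w/(3k). -/
/-!
The spike lives inside the first high-value interval `[0, ℓ^k]`, where `σ₀^k = 3/2`. Hence
`σ₀^k - σ_{w;z}^k` is `-1/2` on the left half of the spike window, `1/2` on its right half and
`0` elsewhere. Both halves have length `w ℓ^k`, so over any `S` the two contributions are at most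
`w ℓ^k / 2` in size, and they have opposite signs: instead of adding up, they leave a total
of at most `w ℓ^k / 2 ≤ w / (3k)`.
-/

open MeasureTheory Set

noncomputable section

attribute [local instance] Classical.propDecidable

/-- The common length of the high-value intervals: `ℓ^k = 1/(3(⌊k/2⌋ + 1/2))`. -/
def ell (k : ℕ) : ℝ := 1 / (3 * ((k / 2 : ℕ) + 1 / 2))

/-- The number of high-value intervals: `⌊k/2⌋ + 1`. -/
def nHigh (k : ℕ) : ℕ := k / 2 + 1

/-- The number of low-value intervals: `⌈k/2⌉`. -/
def nLow (k : ℕ) : ℕ := (k + 1) / 2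

/-- The common length of the low-value intervals. -/
def lowLen (k : ℕ) : ℝ := (1 - nHigh k * ell k) / nLow k

/-- Left endpoint of the `j`-th interval (0-indexed; the intervals alternate
high, low, high, …, starting with a high-value interval). -/
def bd (k : ℕ) (j : ℕ) : ℝ := ((j + 1) / 2 : ℕ) * ell k + (j / 2 : ℕ) * lowLen k

/-- The union `H^k` of the high-value intervals (even-indexed). -/
def Hset (k : ℕ) : Set ℝ :=
  ⋃ j ∈ Finset.range (k + 1),
    if j % 2 = 0 then Set.Icc (bd k j) (bd k (j + 1)) else ∅

/-- The union `L^k` of the (interiors of the) low-value intervals (odd-indexed). -/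
def Lset (k : ℕ) : Set ℝ :=
  ⋃ j ∈ Finset.range (k + 1),
    if j % 2 = 1 then Set.Ioo (bd k j) (bd k (j + 1)) else ∅

/-- The density of the low-value region: `(1 - (3/2)μ(H^k))/μ(L^k)`. -/
def lowDens (k : ℕ) : ℝ :=
  (1 - 3 / 2 * (volume (Hset k)).toReal) / (volume (Lset k)).toReal

/-- The unspiked value density `σ₀^k`: `3/2` on `H^k`, `lowDens k` elsewhere. -/
def sigma0 (k : ℕ) : ℝ → ℝ := fun x => if x ∈ Hset k then 3 / 2 else lowDens k

/-- The spiked value density `σ_{w;z}^k`: equal to `2` for `x/ℓ^k ∈ (z-w, z]`, to `1` for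
`x/ℓ^k ∈ (z, z+w)`, and to `σ₀^k(x)` otherwise. -/
def sigmaSpike (k : ℕ) (w z : ℝ) : ℝ → ℝ := fun x =>
  if x / ell k ∈ Set.Ioc (z - w) z then 2
  else if x / ell k ∈ Set.Ioo z (z + w) then 1
  else sigma0 k x

section IndicatorDifference

variable {X : Type*} [MeasurableSpace X] {μ : Measure X} {A B : Set X}
  {E : Type*} [NormedAddCommGroup E] [NormedSpace ℝ E] [CompleteSpace E]

theorem integral_indicator_const_sub_indicator_const (hA : MeasurableSet A)
    (hB : MeasurableSet B) (hμA : μ A ≠ ⊤) (hμB : μ B ≠ ⊤) (c : E) :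
    ∫ x, (A.indicator (fun _ => c) x - B.indicator (fun _ => c) x) ∂μ =
      (μ.real A - μ.real B) • c := by
  rw [integral_sub ((integrable_indicator_iff hA).2 (integrableOn_const hμA))
    ((integrable_indicator_iff hB).2 (integrableOn_const hμB)),
    integral_indicator_const c hA, integral_indicator_const c hB, sub_smul]

theorem norm_setIntegral_indicator_const_sub_indicator_const_le (hA : MeasurableSet A)
    (hB : MeasurableSet B) (hμA : μ A ≠ ⊤) (hμB : μ B ≠ ⊤) {m : ℝ} (hAm : μ.real A ≤ m)
    (hBm : μ.real B ≤ m) (S : Set X) (c : E) :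
    ‖∫ x in S, (A.indicator (fun _ => c) x - B.indicator (fun _ => c) x) ∂μ‖ ≤ m * ‖c‖ := by
  have restrict_le (T : Set X) : μ.restrict S T ≤ μ T := Measure.restrict_apply_le S T
  rw [integral_indicator_const_sub_indicator_const hA hB
    (ne_top_of_le_ne_top hμA (restrict_le A)) (ne_top_of_le_ne_top hμB (restrict_le B)),
    norm_smul, Real.norm_eq_abs]
  gcongr
  exact abs_sub_le_of_nonneg_of_le
    measureReal_nonneg ((ENNReal.toReal_mono hμA (restrict_le A)).trans hAm)
    measureReal_nonneg ((ENNReal.toReal_mono hμB (restrict_le B)).trans hBm)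

end IndicatorDifference

theorem ell_pos (k : ℕ) : 0 < ell k := by
  unfold ell
  positivity

theorem ell_le_two_div {k : ℕ} (hk : k ≠ 0) : ell k ≤ 2 / (3 * k) := by
  have hk_le : (k : ℝ) ≤ 2 * (k / 2 : ℕ) + 1 := by
    exact_mod_cast (by omega : k ≤ 2 * (k / 2) + 1)
  unfold ell
  rw [div_le_div_iff₀ (by positivity) (by positivity)]
  linarith

theorem measurableSet_Hset (k : ℕ) : MeasurableSet (Hset k) := by
  refine Finset.measurableSet_biUnion _ fun j _ => ?_
  split_ifs
  exacts [measurableSet_Icc, MeasurableSet.empty]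

theorem Icc_zero_ell_subset_Hset (k : ℕ) : Icc 0 (ell k) ⊆ Hset k := by
  have first_interval : Icc (bd k 0) (bd k 1) = Icc 0 (ell k) := by simp [bd]
  rw [← first_interval]
  exact fun x hx => mem_biUnion (x := 0) (by simp) (by simpa using hx)

theorem sigma0_of_mem_Icc {k : ℕ} {x : ℝ} (hx : x ∈ Icc 0 (ell k)) : sigma0 k x = 3 / 2 :=
  if_pos (Icc_zero_ell_subset_Hset k hx)

theorem integrableOn_sigma0 (k : ℕ) {S : Set ℝ} (hS : volume S ≠ ⊤) :
    IntegrableOn (sigma0 k) S :=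
  Integrable.piecewise (measurableSet_Hset k)
    (integrableOn_const hS).integrableOn (integrableOn_const hS).integrableOn

theorem integrableOn_sigmaSpike (k : ℕ) (w z : ℝ) {S : Set ℝ} (hS : volume S ≠ ⊤) :
    IntegrableOn (sigmaSpike k w z) S := by
  have hdiv : Measurable fun x : ℝ => x / ell k := measurable_id.div_const _
  have piecewise_eq : sigmaSpike k w z = ((· / ell k) ⁻¹' Ioc (z - w) z).piecewise (fun _ => 2)
      (((· / ell k) ⁻¹' Ioo z (z + w)).piecewise (fun _ => 1) (sigma0 k)) := by
    funext x
    simp only [sigmaSpike, piecewise, mem_preimage]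
  rw [piecewise_eq]
  exact Integrable.piecewise (hdiv measurableSet_Ioc) (integrableOn_const hS).integrableOn
    (Integrable.piecewise (hdiv measurableSet_Ioo) (integrableOn_const hS).integrableOn
      (integrableOn_sigma0 k hS).integrableOn).integrableOn

theorem sigma0_sub_sigmaSpike {k : ℕ} {w z : ℝ} (hw : 0 ≤ w) (hwz : w ≤ z) (hzw : z + w ≤ 1)
    (x : ℝ) :
    sigma0 k x - sigmaSpike k w z x =
      (Ioo (z * ell k) ((z + w) * ell k)).indicator (fun _ => 1 / 2) x -
        (Ioc ((z - w) * ell k) (z * ell k)).indicator (fun _ => 1 / 2) x := by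
  have hℓ := ell_pos k
  have right_window : Ioo (z * ell k) ((z + w) * ell k) = (· / ell k) ⁻¹' Ioo z (z + w) := by
    ext
    simp only [mem_Ioo, mem_preimage, lt_div_iff₀ hℓ, div_lt_iff₀ hℓ]
  have left_window : Ioc ((z - w) * ell k) (z * ell k) = (· / ell k) ⁻¹' Ioc (z - w) z := by
    ext
    simp only [mem_Ioc, mem_preimage, lt_div_iff₀ hℓ, div_le_iff₀ hℓ]
  rw [right_window, left_window]
  have sigma0_eq (h₀ : 0 ≤ x / ell k) (h₁ : x / ell k ≤ 1) : sigma0 k x = 3 / 2 :=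
    sigma0_of_mem_Icc ⟨by simpa using (le_div_iff₀ hℓ).1 h₀, (div_le_one hℓ).1 h₁⟩
  by_cases hleft : x / ell k ∈ Ioc (z - w) z
  · have hright : x / ell k ∉ Ioo z (z + w) := fun h => h.1.not_ge hleft.2
    have hsigma0 := sigma0_eq (by linarith [hleft.1]) (by linarith [hleft.2])
    norm_num [sigmaSpike, indicator, hleft, hright, hsigma0]
  · by_cases hright : x / ell k ∈ Ioo z (z + w)
    · have hsigma0 := sigma0_eq (by linarith [hright.1]) (by linarith [hright.2])
      norm_num [sigmaSpike, indicator, hleft, hright, hsigma0]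
    · simp [sigmaSpike, indicator, hleft, hright]

theorem spiked_similarity_general {k : ℕ} (hk : k ≠ 0) {w z : ℝ} (hw : 0 ≤ w) (hwz : w ≤ z)
    (hzw : z + w ≤ 1) {S : Set ℝ} (hS : volume S ≠ ⊤) :
    |(∫ x in S, sigma0 k x) - ∫ x in S, sigmaSpike k w z x| ≤ w / (3 * k) := by
  have hℓ := ell_pos k
  have right_length : volume.real (Ioo (z * ell k) ((z + w) * ell k)) = w * ell k := by
    rw [Real.volume_real_Ioo_of_le (by gcongr; linarith)]
    ring
  have left_length : volume.real (Ioc ((z - w) * ell k) (z * ell k)) = w * ell k := by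
    rw [Real.volume_real_Ioc_of_le (by gcongr; linarith)]
    ring
  rw [← integral_sub (integrableOn_sigma0 k hS) (integrableOn_sigmaSpike k w z hS)]
  simp only [sigma0_sub_sigmaSpike hw hwz hzw]
  calc
    _ ≤ w * ell k * ‖(1 / 2 : ℝ)‖ :=
      norm_setIntegral_indicator_const_sub_indicator_const_le measurableSet_Ioo
        measurableSet_Ioc measure_Ioo_lt_top.ne measure_Ioc_lt_top.ne right_length.le
        left_length.le S _
    _ ≤ w * (2 / (3 * k)) * ‖(1 / 2 : ℝ)‖ := by
      gcongr
      exact ell_le_two_div hk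
    _ = w / (3 * k) := by
      rw [Real.norm_of_nonneg (by norm_num)]
      ring

/-- spike similarity: for every `k ≥ 2`, `z ∈ [5/6, 11/12]`,
`w ∈ (0, 1/48]` and every Lebesgue-measurable `S ⊆ [0,1]`,
`|∫_S σ₀^k − ∫_S σ_{w;z}^k| ≤ 2w/(3k)`. -/
theorem spiked_similarity (k : ℕ) (hk : 2 ≤ k)
    (z : ℝ) (hz : z ∈ Set.Icc (5/6 : ℝ) (11/12))
    (w : ℝ) (hw : w ∈ Set.Ioc (0 : ℝ) (1/48))
    (S : Set ℝ) (hSmeas : MeasurableSet S) (hSsub : S ⊆ Set.Icc 0 1) :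
    |(∫ x in S, sigma0 k x) - ∫ x in S, sigmaSpike k w z x| ≤ 2 * w / (3 * k) := by
  have hS : volume S ≠ ⊤ := measure_ne_top_of_subset hSsub measure_Icc_lt_top.ne
  refine (spiked_similarity_general (by omega) hw.1.le (by linarith [hz.1, hw.2])
    (by linarith [hz.2, hw.2]) hS).trans ?_
  gcongr
  linarith [hw.1]

end
end

section
/- Let 0 < δ ≤ Δ, let v_A and v_B be value densities, and let k ≥ 1 be an integer. Let 0 = x₁ < x₂ < ⋯ < x_n = 1 and v > 0 satisfy V_A([x_i, x_{i+1}]) ≤ v for all i ∈ {1, …, n−1}. Then for every alternating partition (Y_A, Y_B) induced by k cut points with V_B(Y_B) ≥ 1/2, there exists an alternating partition (Z_A, Z_B) induced by k cut points all belonging to {x₁, …, x_n} such that V_B(Z_B) ≥ 1/2 and V_A(Z_A) ≥ V_A(Y_A) − k·v. In particular, there exists an alternating partition (Z_A, Z_B) induced by k cut points in {x₁, …, x_n} with V_B(Z_B) ≥ 1/2 and V_A(Z_A) ≥ u_A^*(k) − k·v. -/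
open MeasureTheory Set

noncomputable section

attribute [local instance] Classical.propDecidable

/-- A value density: measurable, bounded in `[δ, Δ]` on `[0,1]`, integrating to 1 on `[0,1]`. -/
def IsValueDensity (δ Δ : ℝ) (v : ℝ → ℝ) : Prop :=
  Measurable v ∧ (∀ x ∈ Set.Icc (0:ℝ) 1, v x ∈ Set.Icc δ Δ) ∧
    (∫ x in Set.Icc (0:ℝ) 1, v x) = 1

/-- The value of a piece `S` under density `v`. -/
def pieceVal (v : ℝ → ℝ) (S : Set ℝ) : ℝ := ∫ x in S, v x

/-- Extended cut points: `0, c 0, …, c (k-1), 1`. -/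
def extCuts (k : ℕ) (c : Fin k → ℝ) : ℕ → ℝ := fun i =>
  if i = 0 then 0 else if h : i - 1 < k then c ⟨i - 1, h⟩ else 1

/-- A valid vector of `k` cut points: nondecreasing, within `[0,1]`. -/
def ValidCuts (k : ℕ) (c : Fin k → ℝ) : Prop :=
  Monotone c ∧ ∀ i, c i ∈ Set.Icc (0:ℝ) 1

/-- The two pieces of the alternating partition induced by cuts `c`:
`true` gives the union of even-indexed intervals, `false` the odd-indexed ones. -/
def altPiece (k : ℕ) (c : Fin k → ℝ) (b : Bool) : Set ℝ :=
  ⋃ i ∈ Finset.range (k + 1),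
    if decide (i % 2 = 0) = b then Set.Icc (extCuts k c i) (extCuts k c (i + 1)) else ∅

/-- Alice's Stackelberg value with `k` cuts: max of `V_A(Z_A)` over alternating partitions
`(Z_A, Z_B)` induced by `k` cut points with `V_B(Z_B) ≥ 1/2`. -/
def stackelbergValue (k : ℕ) (vA vB : ℝ → ℝ) : ℝ :=
  sSup { u : ℝ | ∃ (c : Fin k → ℝ) (b : Bool), ValidCuts k c ∧
    1 / 2 ≤ pieceVal vB (altPiece k c (!b)) ∧ u = pieceVal vA (altPiece k c b) }

/-- A history of play: the list of (Alice's cuts, Bob's choice) in past rounds. -/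
abbrev Hist (k : ℕ) := List ((Fin k → ℝ) × Bool)

/-- Alice's deterministic strategy: horizon and history ↦ next cut vector. -/
abbrev AliceStrategy (k : ℕ) := ℕ → Hist k → (Fin k → ℝ)

/-- Bob's deterministic strategy: horizon, history, and Alice's current cuts ↦ choice. -/
abbrev BobStrategy (k : ℕ) := ℕ → Hist k → (Fin k → ℝ) → Bool

/-- The history of play after `t` rounds. -/
def playHist (k : ℕ) (SA : AliceStrategy k) (SB : BobStrategy k) (T : ℕ) : ℕ → Hist k
  | 0 => []
  | t + 1 =>
      let h := playHist k SA SB T t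
      let cuts := SA T h
      h ++ [(cuts, SB T h cuts)]

/-- Alice's cuts in round `t` (0-indexed). -/
def roundCuts (k : ℕ) (SA : AliceStrategy k) (SB : BobStrategy k) (T t : ℕ) : Fin k → ℝ :=
  SA T (playHist k SA SB T t)

/-- Bob's choice in round `t` (0-indexed). -/
def roundChoice (k : ℕ) (SA : AliceStrategy k) (SB : BobStrategy k) (T t : ℕ) : Bool :=
  SB T (playHist k SA SB T t) (roundCuts k SA SB T t)

/-- Alice's Stackelberg regret over horizon `T`: in each round she receives the value of
the piece Bob did not choose. -/
def aliceRegret (k : ℕ) (vA vB : ℝ → ℝ) (SA : AliceStrategy k) (SB : BobStrategy k)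
    (T : ℕ) : ℝ :=
  ∑ t ∈ Finset.range T,
    (stackelbergValue k vA vB -
      pieceVal vA (altPiece k (roundCuts k SA SB T t) (!(roundChoice k SA SB T t))))

/-- Bob's regret over horizon `T` relative to always choosing his preferred piece. -/
def bobRegret (k : ℕ) (vB : ℝ → ℝ) (SA : AliceStrategy k) (SB : BobStrategy k) (T : ℕ) : ℝ :=
  ∑ t ∈ Finset.range T,
    (max (pieceVal vB (altPiece k (roundCuts k SA SB T t) true))
        (pieceVal vB (altPiece k (roundCuts k SA SB T t) false)) -
      pieceVal vB (altPiece k (roundCuts k SA SB T t) (roundChoice k SA SB T t)))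

/-- Bob's strategy guarantees regret at most `R T` against every Alice strategy and horizon. -/
def BobGuarantees (k : ℕ) (vB : ℝ → ℝ) (SB : BobStrategy k) (R : ℕ → ℝ) : Prop :=
  ∀ (SA : AliceStrategy k) (T : ℕ), bobRegret k vB SA SB T ≤ R T

/-- The myopic Bob: chooses the piece of larger `V_B`-value, breaking ties towards
the piece of smaller `V_A`-value. -/
def myopicBob (k : ℕ) (vA vB : ℝ → ℝ) : BobStrategy k := fun _ _ c =>
  if pieceVal vB (altPiece k c false) < pieceVal vB (altPiece k c true) then true
  else if pieceVal vB (altPiece k c true) < pieceVal vB (altPiece k c false) then false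
  else if pieceVal vA (altPiece k c true) ≤ pieceVal vA (altPiece k c false) then true
  else false

/-- Alice's strategy always produces valid cut vectors. -/
def AliceValid (k : ℕ) (SA : AliceStrategy k) : Prop := ∀ T h, ValidCuts k (SA T h)

/-! Mark the division points `0, c₁, …, c_k, 1` and shrink every interval of Alice's piece to grid
points: its left end moves up and its right end moves down, an interval with fewer than two grid
points collapsing to a single point. Up to finitely many points Alice's new piece lies inside her
old one, so Bob's piece only grows. What Alice loses is covered by the grid cells containing the
`k` cuts, each of which is worth at most `v` to her. -/

lemma exists_mem_Icc_succ {α : Type*} [LinearOrder α] (f : ℕ → α) {m n : ℕ} (hmn : m < n) {y : α}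
    (hy : y ∈ Icc (f m) (f n)) : ∃ i, m ≤ i ∧ i < n ∧ y ∈ Icc (f i) (f (i + 1)) := by
  induction n, hmn using Nat.le_induction with
  | base => exact ⟨m, le_rfl, m.lt_succ_self, hy⟩
  | succ n hmn ih =>
    rcases le_total y (f n) with hyn | hyn
    · obtain ⟨i, hmi, hin, hyi⟩ := ih ⟨hy.1, hyn⟩
      exact ⟨i, hmi, hin.trans n.lt_succ_self, hyi⟩
    · exact ⟨n, (Nat.le_succ m).trans hmn, n.lt_succ_self, hyn, hy.2⟩

lemma exists_sSup_sub_le {α : Type*} [ConditionallyCompleteLinearOrder α] [AddGroup α]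
    [AddRightMono α] {S T : Set α} {ε : α} (hS : S.Nonempty) (hT : T.Finite)
    (h : ∀ s ∈ S, ∃ t ∈ T, s - ε ≤ t) : ∃ t ∈ T, sSup S - ε ≤ t := by
  obtain ⟨s, hs⟩ := hS
  have hT' : T.Nonempty := let ⟨t, ht, _⟩ := h s hs; ⟨t, ht⟩
  refine ⟨sSup T, hT'.csSup_mem hT, sub_le_iff_le_add.2 (csSup_le ⟨s, hs⟩ fun s hs ↦ ?_)⟩
  obtain ⟨t, ht, hst⟩ := h s hs
  exact sub_le_iff_le_add.1 (hst.trans (le_csSup hT.bddAbove ht))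

lemma measureReal_le_of_subset_union_countable {α : Type*} [MeasurableSpace α] {μ : Measure α}
    [IsFiniteMeasure μ] [NullSingletonClass μ] {S T C : Set α} (hC : C.Countable)
    (h : S ⊆ T ∪ C) : μ.real S ≤ μ.real T :=
  calc μ.real S ≤ μ.real (T ∪ C) := measureReal_mono h
    _ ≤ μ.real T + μ.real C := measureReal_union_le T C
    _ = μ.real T := by simp [measureReal_def, hC.measure_zero]

section Rounding

variable {α : Type*} [ConditionallyCompleteLinearOrder α] {G : Set α} {g y z : α}

/-- The least point of the grid `G` that is `≥ y`; meaningful when `G` is finite and has such a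
point. -/
def roundUp (G : Set α) (y : α) : α := sInf (G ∩ Ici y)

/-- The greatest point of the grid `G` that is `≤ y`; meaningful when `G` is finite and has such a
point. -/
def roundDown (G : Set α) (y : α) : α := sSup (G ∩ Iic y)

/-- The smallest interval with end points in the grid `G` that contains `y`; it is the single
point `y` when `y ∈ G`. -/
def gridCell (G : Set α) (y : α) : Set α := Icc (roundDown G y) (roundUp G y)

lemma roundUp_le (hg : g ∈ G) (hyg : y ≤ g) : roundUp G y ≤ g :=
  csInf_le ⟨y, fun _ hz ↦ hz.2⟩ ⟨hg, hyg⟩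

lemma le_roundDown (hg : g ∈ G) (hgy : g ≤ y) : g ≤ roundDown G y :=
  le_csSup ⟨y, fun _ hz ↦ hz.2⟩ ⟨hg, hgy⟩

lemma roundUp_mem (hG : G.Finite) (hg : g ∈ G) (hyg : y ≤ g) : roundUp G y ∈ G :=
  (Nonempty.csInf_mem (s := G ∩ Ici y) ⟨g, hg, hyg⟩ (hG.inter_of_left _)).1

lemma roundDown_mem (hG : G.Finite) (hg : g ∈ G) (hgy : g ≤ y) : roundDown G y ∈ G :=
  (Nonempty.csSup_mem (s := G ∩ Iic y) ⟨g, hg, hgy⟩ (hG.inter_of_left _)).1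

lemma le_roundUp (hg : g ∈ G) (hyg : y ≤ g) : y ≤ roundUp G y :=
  le_csInf ⟨g, hg, hyg⟩ fun _ hz ↦ hz.2

lemma roundDown_le (hg : g ∈ G) (hgy : g ≤ y) : roundDown G y ≤ y :=
  csSup_le ⟨g, hg, hgy⟩ fun _ hz ↦ hz.2

lemma roundUp_eq_self (hy : y ∈ G) : roundUp G y = y :=
  (roundUp_le hy le_rfl).antisymm (le_roundUp hy le_rfl)

lemma roundDown_eq_self (hy : y ∈ G) : roundDown G y = y :=
  (roundDown_le hy le_rfl).antisymm (le_roundDown hy le_rfl)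

lemma roundUp_le_roundUp (hg : g ∈ G) (hzg : z ≤ g) (hyz : y ≤ z) : roundUp G y ≤ roundUp G z :=
  le_csInf ⟨g, hg, hzg⟩ fun _ hw ↦ roundUp_le hw.1 (hyz.trans hw.2)

lemma gridCell_subset_Icc {a b : α} (ha : a ∈ G) (hb : b ∈ G) (hy : y ∈ Icc a b) :
    gridCell G y ⊆ Icc a b :=
  Icc_subset_Icc (le_roundDown ha hy.1) (roundUp_le hb hy.2)

lemma exists_gridCell_subset_Icc_succ (x : ℕ → α) {m n : ℕ} (hmn : m < n)
    (hy : y ∈ Icc (x m) (x n)) :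
    ∃ i, m ≤ i ∧ i < n ∧ gridCell (x '' Icc m n) y ⊆ Icc (x i) (x (i + 1)) := by
  obtain ⟨i, hmi, hin, hyi⟩ := exists_mem_Icc_succ x hmn hy
  exact ⟨i, hmi, hin, gridCell_subset_Icc (mem_image_of_mem x ⟨hmi, hin.le⟩)
    (mem_image_of_mem x ⟨by omega, hin⟩) hyi⟩

end Rounding

section Pieces

variable {k : ℕ} {c : Fin k → ℝ} {b : Bool} {i : ℕ}

lemma extCuts_zero (k : ℕ) (c : Fin k → ℝ) : extCuts k c 0 = 0 := by simp [extCuts]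

lemma extCuts_succ (c : Fin k → ℝ) (j : Fin k) : extCuts k c (j + 1) = c j := by simp [extCuts]

lemma extCuts_of_lt (c : Fin k → ℝ) (hi : k < i) : extCuts k c i = 1 := by
  simp [extCuts, show i ≠ 0 by omega, show ¬ i - 1 < k by omega]

lemma eq_zero_or_eq_succ_or_lt (k i : ℕ) : i = 0 ∨ (∃ j : Fin k, i = j + 1) ∨ k < i := by
  rcases i with _ | i
  · exact .inl rfl
  · rcases lt_or_ge i k with hi | hi
    · exact .inr (.inl ⟨⟨i, hi⟩, rfl⟩)
    · exact .inr (.inr (by omega))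

lemma ValidCuts.extCuts_mem_Icc (hc : ValidCuts k c) (i : ℕ) : extCuts k c i ∈ Icc (0 : ℝ) 1 := by
  rcases eq_zero_or_eq_succ_or_lt k i with rfl | ⟨j, rfl⟩ | hi
  · simp [extCuts_zero]
  · exact extCuts_succ c j ▸ hc.2 j
  · simp [extCuts_of_lt c hi]

lemma ValidCuts.monotone_extCuts (hc : ValidCuts k c) : Monotone (extCuts k c) := by
  intro i j hij
  rcases eq_zero_or_eq_succ_or_lt k i with rfl | ⟨i, rfl⟩ | hi
  · exact extCuts_zero k c ▸ (hc.extCuts_mem_Icc j).1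
  · rcases eq_zero_or_eq_succ_or_lt k j with rfl | ⟨j, rfl⟩ | hj
    · omega
    · simpa only [extCuts_succ] using hc.1 (Fin.le_def.2 (Nat.le_of_succ_le_succ hij))
    · exact extCuts_of_lt c hj ▸ (hc.extCuts_mem_Icc _).2
  · rw [extCuts_of_lt c hi, extCuts_of_lt c (hi.trans_le hij)]

lemma mem_altPiece {y : ℝ} : y ∈ altPiece k c b ↔
    ∃ i ≤ k, decide (i % 2 = 0) = b ∧ y ∈ Icc (extCuts k c i) (extCuts k c (i + 1)) := by
  simp only [altPiece, mem_iUnion, Finset.mem_range, Nat.lt_succ_iff, exists_prop]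
  refine exists_congr fun i ↦ and_congr_right fun _ ↦ ?_
  split_ifs with hi <;> simp [hi]

lemma decide_succ_mod_two (i : ℕ) : decide ((i + 1) % 2 = 0) = !decide (i % 2 = 0) := by
  rcases Nat.mod_two_eq_zero_or_one i with hi | hi <;> simp [Nat.add_mod, hi]

lemma ValidCuts.altPiece_subset_Icc (hc : ValidCuts k c) (b : Bool) :
    altPiece k c b ⊆ Icc 0 1 := by
  intro y hy
  obtain ⟨i, -, -, hy⟩ := mem_altPiece.1 hy
  exact ⟨(hc.extCuts_mem_Icc i).1.trans hy.1, hy.2.trans (hc.extCuts_mem_Icc (i + 1)).2⟩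

lemma Icc_subset_altPiece_union (c : Fin k → ℝ) (b : Bool) :
    Icc 0 1 ⊆ altPiece k c b ∪ altPiece k c (!b) := by
  intro y hy
  obtain ⟨i, -, hik, hyi⟩ := exists_mem_Icc_succ (extCuts k c) k.succ_pos
    (by rwa [extCuts_zero, extCuts_of_lt c k.lt_succ_self])
  have hpiece : y ∈ altPiece k c (decide (i % 2 = 0)) :=
    mem_altPiece.2 ⟨i, Nat.lt_succ_iff.1 hik, rfl, hyi⟩
  rcases Bool.eq_or_eq_not (decide (i % 2 = 0)) b with hb | hb
  · exact .inl (hb ▸ hpiece)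
  · exact .inr (hb ▸ hpiece)

lemma ValidCuts.altPiece_inter_subset (hc : ValidCuts k c) (b : Bool) :
    altPiece k c b ∩ altPiece k c (!b) ⊆ range (extCuts k c) := by
  rintro y ⟨hy, hy'⟩
  obtain ⟨i, -, hi, hyi⟩ := mem_altPiece.1 hy
  obtain ⟨j, -, hj, hyj⟩ := mem_altPiece.1 hy'
  rcases lt_trichotomy i j with hij | rfl | hij
  · exact ⟨j, hyj.1.antisymm (hyi.2.trans (hc.monotone_extCuts hij))⟩
  · exact absurd (hi.symm.trans hj) (by simp)
  · exact ⟨i, hyi.1.antisymm (hyj.2.trans (hc.monotone_extCuts hij))⟩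

end Pieces

section InwardSeq

variable {α : Type*} [ConditionallyCompleteLinearOrder α] {G : Set α} {b : Bool} {e : ℕ → α}
  {l u : α} {i : ℕ}

/-- The division points `e` after moving inward to the grid `G` the end points of the intervals
`[e i, e (i + 1)]` of piece `b`. The `max` keeps an interval whose ends would cross as a single
point. At `i = 0` truncation makes `e (i - 1)` equal to `e 0`, which is harmless when `e 0 ∈ G`. -/
def inwardSeq (G : Set α) (b : Bool) (e : ℕ → α) (i : ℕ) : α :=
  if decide (i % 2 = 0) = b then roundUp G (e i)
  else max (roundDown G (e i)) (roundUp G (e (i - 1)))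

lemma inwardSeq_of_parity_eq (hi : decide (i % 2 = 0) = b) : inwardSeq G b e i = roundUp G (e i) :=
  if_pos hi

lemma inwardSeq_succ_of_parity_eq (hi : decide (i % 2 = 0) = b) :
    inwardSeq G b e (i + 1) = max (roundDown G (e (i + 1))) (roundUp G (e i)) :=
  if_neg (by simp [decide_succ_mod_two, hi])

lemma inwardSeq_eq_self (hi : e i ∈ G) (hle : e (i - 1) ≤ e i) : inwardSeq G b e i = e i := by
  simp only [inwardSeq, roundUp_eq_self hi, roundDown_eq_self hi, max_eq_left (roundUp_le hi hle),
    ite_self]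

lemma inwardSeq_mem (hG : G.Finite) (hl : l ∈ G) (hu : u ∈ G)
    (he : ∀ i, e i ∈ Icc l u) (i : ℕ) : inwardSeq G b e i ∈ G := by
  rw [inwardSeq]
  split_ifs
  · exact roundUp_mem hG hu (he i).2
  · rcases max_choice (roundDown G (e i)) (roundUp G (e (i - 1))) with h | h <;> rw [h]
    · exact roundDown_mem hG hl (he i).1
    · exact roundUp_mem hG hu (he (i - 1)).2

lemma monotone_inwardSeq (hl : l ∈ G) (hu : u ∈ G) (he : ∀ i, e i ∈ Icc l u)
    (hmono : Monotone e) : Monotone (inwardSeq G b e) := by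
  refine monotone_nat_of_le_succ fun i ↦ ?_
  by_cases hi : decide (i % 2 = 0) = b
  · rw [inwardSeq_of_parity_eq hi, inwardSeq_succ_of_parity_eq hi]
    exact le_max_right _ _
  · have hi' : decide ((i + 1) % 2 = 0) = b := by
      rw [decide_succ_mod_two, ← Bool.eq_not.2 (Ne.symm hi)]
    rw [inwardSeq_of_parity_eq hi', inwardSeq, if_neg hi]
    refine max_le ?_ (roundUp_le_roundUp hu (he (i + 1)).2 (hmono (by omega)))
    calc roundDown G (e i) ≤ e i := roundDown_le hl (he i).1
      _ ≤ e (i + 1) := hmono i.le_succ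
      _ ≤ roundUp G (e (i + 1)) := le_roundUp hu (he (i + 1)).2

end InwardSeq

section InwardCuts

variable {k : ℕ} {c : Fin k → ℝ} {G : Set ℝ} {b : Bool}

/-- The cuts obtained from `c` by shrinking the intervals of piece `b` to the grid `G`. -/
def inwardCuts (G : Set ℝ) (b : Bool) (c : Fin k → ℝ) : Fin k → ℝ :=
  fun j ↦ inwardSeq G b (extCuts k c) (j + 1)

lemma extCuts_mem_or_eq (h0 : (0 : ℝ) ∈ G) (h1 : (1 : ℝ) ∈ G) (c : Fin k → ℝ) (i : ℕ) :
    extCuts k c i ∈ G ∨ ∃ j, extCuts k c i = c j := by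
  rcases eq_zero_or_eq_succ_or_lt k i with rfl | ⟨j, rfl⟩ | hi
  · exact .inl (by rwa [extCuts_zero])
  · exact .inr ⟨j, extCuts_succ c j⟩
  · exact .inl (by rwa [extCuts_of_lt c hi])

variable (hc : ValidCuts k c) (h0 : (0 : ℝ) ∈ G) (h1 : (1 : ℝ) ∈ G)

include hc h0 h1

lemma ValidCuts.extCuts_inwardCuts :
    extCuts k (inwardCuts G b c) = inwardSeq G b (extCuts k c) := by
  ext i
  have hle : extCuts k c (i - 1) ≤ extCuts k c i := hc.monotone_extCuts i.pred_le
  rcases eq_zero_or_eq_succ_or_lt k i with rfl | ⟨j, rfl⟩ | hi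
  · rw [inwardSeq_eq_self (by rwa [extCuts_zero]) hle, extCuts_zero, extCuts_zero]
  · rw [extCuts_succ, inwardCuts]
  · rw [inwardSeq_eq_self (by rwa [extCuts_of_lt c hi]) hle, extCuts_of_lt _ hi, extCuts_of_lt _ hi]

lemma ValidCuts.validCuts_inwardCuts : ValidCuts k (inwardCuts G b c) := by
  have hmono : Monotone (inwardSeq G b (extCuts k c)) :=
    monotone_inwardSeq h0 h1 hc.extCuts_mem_Icc hc.monotone_extCuts
  have hext := hc.extCuts_inwardCuts h0 h1 (b := b)
  refine ⟨fun i j hij ↦ hmono (Nat.succ_le_succ hij), fun j ↦ ⟨?_, ?_⟩⟩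
  · calc 0 = inwardSeq G b (extCuts k c) 0 := by rw [← hext, extCuts_zero]
      _ ≤ inwardCuts G b c j := hmono (Nat.zero_le _)
  · calc inwardCuts G b c j ≤ inwardSeq G b (extCuts k c) (k + 1) := hmono (Nat.succ_le_succ j.2.le)
      _ = 1 := by rw [← hext, extCuts_of_lt _ k.lt_succ_self]

lemma ValidCuts.altPiece_inwardCuts_subset :
    altPiece k (inwardCuts G b c) b ⊆
      altPiece k c b ∪ range (extCuts k (inwardCuts G b c)) := by
  intro y hy
  obtain ⟨i, hik, hi, hy⟩ := mem_altPiece.1 hy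
  rw [hc.extCuts_inwardCuts h0 h1] at hy ⊢
  have hleft := inwardSeq_of_parity_eq (G := G) (e := extCuts k c) hi
  rw [inwardSeq_succ_of_parity_eq hi, mem_Icc, le_max_iff, hleft] at hy
  rcases hy with ⟨hly, hyr | hyl⟩
  · refine .inl (mem_altPiece.2 ⟨i, hik, hi, ?_, ?_⟩)
    · exact (le_roundUp h1 (hc.extCuts_mem_Icc i).2).trans hly
    · exact hyr.trans (roundDown_le h0 (hc.extCuts_mem_Icc (i + 1)).1)
  · exact .inr ⟨i, hleft.trans (hly.antisymm hyl)⟩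

lemma ValidCuts.altPiece_bnot_subset_inwardCuts_union_range :
    altPiece k c (!b) ⊆ altPiece k (inwardCuts G b c) (!b) ∪
      (range (extCuts k c) ∪ range (extCuts k (inwardCuts G b c))) := by
  intro y hy
  rcases Icc_subset_altPiece_union (inwardCuts G b c) b (hc.altPiece_subset_Icc _ hy) with
    hyb | hyb
  · rcases hc.altPiece_inwardCuts_subset h0 h1 hyb with hyc | hyr
    · exact .inr (.inl (hc.altPiece_inter_subset b ⟨hyc, hy⟩))
    · exact .inr (.inr hyr)
  · exact .inl hyb

lemma ValidCuts.altPiece_subset_inwardCuts_union_gridCell :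
    altPiece k c b ⊆ altPiece k (inwardCuts G b c) b ∪ ⋃ j, gridCell G (c j) := by
  intro y hy
  obtain ⟨i, hik, hi, hly, hyr⟩ := mem_altPiece.1 hy
  have hboundary : ∀ i, y ∈ gridCell G (extCuts k c i) → extCuts k c i ∉ G →
      y ∈ ⋃ j, gridCell G (c j) := by
    intro i hyi hi
    obtain ⟨j, hj⟩ := (extCuts_mem_or_eq h0 h1 c i).resolve_left hi
    exact mem_iUnion.2 ⟨j, hj ▸ hyi⟩
  rcases lt_or_ge y (roundUp G (extCuts k c i)) with hyU | hUy
  · refine .inr (hboundary i ⟨?_, hyU.le⟩ fun hmem ↦ hyU.not_ge ?_)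
    · exact (roundDown_le h0 (hc.extCuts_mem_Icc i).1).trans hly
    · exact (roundUp_eq_self hmem).trans_le hly
  rcases lt_or_ge (roundDown G (extCuts k c (i + 1))) y with hDy | hyD
  · refine .inr (hboundary (i + 1) ⟨hDy.le, ?_⟩ fun hmem ↦ hDy.not_ge ?_)
    · exact hyr.trans (le_roundUp h1 (hc.extCuts_mem_Icc (i + 1)).2)
    · exact hyr.trans_eq (roundDown_eq_self hmem).symm
  refine .inl (mem_altPiece.2 ⟨i, hik, hi, ?_⟩)
  rw [hc.extCuts_inwardCuts h0 h1, inwardSeq_of_parity_eq hi, inwardSeq_succ_of_parity_eq hi]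
  exact ⟨hUy, hyD.trans (le_max_left _ _)⟩

end InwardCuts

section Density

/-- The weakest kind of density for which the pieces of the cake `[0, 1]` have finite nonnegative
values. -/
structure IsNonnegDensity (v : ℝ → ℝ) : Prop where
  integrableOn : IntegrableOn v (Icc 0 1)
  nonneg : 0 ≤ᵐ[volume.restrict (Icc 0 1)] v

/-- The finite atomless measure on the cake `[0, 1]` with density `v`; it turns statements about
`pieceVal v` into statements about sets. -/
def cakeMeasure (v : ℝ → ℝ) : Measure ℝ :=
  (volume.restrict (Icc 0 1)).withDensity fun x ↦ ENNReal.ofReal (v x)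

instance (v : ℝ → ℝ) : NullSingletonClass (cakeMeasure v) :=
  inferInstanceAs (NullSingletonClass (Measure.withDensity _ _))

variable {δ Δ : ℝ} {v : ℝ → ℝ} {S T : Set ℝ} {k : ℕ} {c : Fin k → ℝ} {G : Set ℝ}

lemma IsValueDensity.isNonnegDensity (hδ : 0 ≤ δ) (hv : IsValueDensity δ Δ v) :
    IsNonnegDensity v where
  integrableOn := by
    refine Measure.integrableOn_of_bounded (M := Δ) (by simp) hv.1.aestronglyMeasurable ?_
    filter_upwards [ae_restrict_mem measurableSet_Icc] with x hx
    obtain ⟨hlow, hupp⟩ := hv.2.1 x hx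
    rwa [Real.norm_of_nonneg (hδ.trans hlow)]
  nonneg := by
    filter_upwards [ae_restrict_mem measurableSet_Icc] with x hx
    exact hδ.trans (hv.2.1 x hx).1

namespace IsNonnegDensity

lemma isFiniteMeasure (hv : IsNonnegDensity v) : IsFiniteMeasure (cakeMeasure v) :=
  isFiniteMeasure_withDensity_ofReal hv.integrableOn.hasFiniteIntegral

lemma pieceVal_eq_measureReal (hv : IsNonnegDensity v) (hS : S ⊆ Icc 0 1) :
    pieceVal v S = (cakeMeasure v).real S := by
  have hnonneg : 0 ≤ᵐ[volume.restrict S] v := ae_restrict_of_ae_restrict_of_subset hS hv.nonneg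
  rw [pieceVal, integral_eq_lintegral_of_nonneg_ae hnonneg
    (hv.integrableOn.mono_set hS).aestronglyMeasurable, measureReal_def, cakeMeasure,
    withDensity_apply', Measure.restrict_restrict_of_subset hS]

lemma pieceVal_mono (hv : IsNonnegDensity v) (hST : S ⊆ T) (hT : T ⊆ Icc 0 1) :
    pieceVal v S ≤ pieceVal v T := by
  have := hv.isFiniteMeasure
  rw [hv.pieceVal_eq_measureReal hT, hv.pieceVal_eq_measureReal (hST.trans hT)]
  exact measureReal_mono hST

lemma pieceVal_Icc_le_add (hv : IsNonnegDensity v) (hc : ValidCuts k c) (b : Bool) :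
    pieceVal v (Icc 0 1) ≤ pieceVal v (altPiece k c b) + pieceVal v (altPiece k c (!b)) := by
  have := hv.isFiniteMeasure
  rw [hv.pieceVal_eq_measureReal subset_rfl, hv.pieceVal_eq_measureReal (hc.altPiece_subset_Icc b),
    hv.pieceVal_eq_measureReal (hc.altPiece_subset_Icc (!b))]
  exact (measureReal_mono (Icc_subset_altPiece_union c b)).trans (measureReal_union_le _ _)

lemma pieceVal_altPiece_bnot_le_inwardCuts (hv : IsNonnegDensity v) (hc : ValidCuts k c)
    (h0 : 0 ∈ G) (h1 : 1 ∈ G) (b : Bool) :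
    pieceVal v (altPiece k c (!b)) ≤ pieceVal v (altPiece k (inwardCuts G b c) (!b)) := by
  have := hv.isFiniteMeasure
  rw [hv.pieceVal_eq_measureReal (hc.altPiece_subset_Icc _),
    hv.pieceVal_eq_measureReal ((hc.validCuts_inwardCuts h0 h1).altPiece_subset_Icc _)]
  exact measureReal_le_of_subset_union_countable
    ((countable_range _).union (countable_range _))
    (hc.altPiece_bnot_subset_inwardCuts_union_range h0 h1)

lemma pieceVal_altPiece_le_inwardCuts_add (hv : IsNonnegDensity v) (hc : ValidCuts k c)
    (h0 : 0 ∈ G) (h1 : 1 ∈ G) {ε : ℝ} (hε : ∀ y ∈ Icc (0 : ℝ) 1, pieceVal v (gridCell G y) ≤ ε)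
    (b : Bool) :
    pieceVal v (altPiece k c b) ≤ pieceVal v (altPiece k (inwardCuts G b c) b) + k * ε := by
  have := hv.isFiniteMeasure
  have hcell (j : Fin k) : (cakeMeasure v).real (gridCell G (c j)) ≤ ε :=
    hv.pieceVal_eq_measureReal (gridCell_subset_Icc h0 h1 (hc.2 j)) ▸ hε (c j) (hc.2 j)
  rw [hv.pieceVal_eq_measureReal (hc.altPiece_subset_Icc _),
    hv.pieceVal_eq_measureReal ((hc.validCuts_inwardCuts h0 h1).altPiece_subset_Icc _)]
  set μ := cakeMeasure v
  calc μ.real (altPiece k c b)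
      ≤ μ.real (altPiece k (inwardCuts G b c) b ∪ ⋃ j, gridCell G (c j)) :=
        measureReal_mono (hc.altPiece_subset_inwardCuts_union_gridCell h0 h1)
    _ ≤ μ.real (altPiece k (inwardCuts G b c) b) + μ.real (⋃ j, gridCell G (c j)) :=
        measureReal_union_le _ _
    _ ≤ μ.real (altPiece k (inwardCuts G b c) b) + ∑ j, μ.real (gridCell G (c j)) := by
        gcongr; exact measureReal_iUnion_fintype_le _
    _ ≤ μ.real (altPiece k (inwardCuts G b c) b) + k * ε := by
        gcongr; simpa using Finset.sum_le_card_nsmul Finset.univ _ ε fun j _ ↦ hcell j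

lemma exists_half_le_pieceVal (hv : IsNonnegDensity v) (hone : pieceVal v (Icc 0 1) = 1)
    (hc : ValidCuts k c) : ∃ b, 1 / 2 ≤ pieceVal v (altPiece k c (!b)) := by
  have hsum := hv.pieceVal_Icc_le_add hc true
  rcases le_total (1 / 2) (pieceVal v (altPiece k c (!true))) with h | h
  · exact ⟨true, h⟩
  · exact ⟨false, by simp only [Bool.not_false]; linarith⟩

end IsNonnegDensity

end Density

section Grid

variable {k : ℕ} {c : Fin k → ℝ} {G : Set ℝ} {vA vB : ℝ → ℝ} {v : ℝ}

lemma exists_grid_cuts (hA : IsNonnegDensity vA) (hB : IsNonnegDensity vB) (hG : G.Finite)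
    (h0 : 0 ∈ G) (h1 : 1 ∈ G) (hcell : ∀ y ∈ Icc (0 : ℝ) 1, pieceVal vA (gridCell G y) ≤ v)
    (hc : ValidCuts k c) (b : Bool) :
    ∃ c' : Fin k → ℝ, ValidCuts k c' ∧ (∀ i, c' i ∈ G) ∧
      pieceVal vB (altPiece k c (!b)) ≤ pieceVal vB (altPiece k c' (!b)) ∧
      pieceVal vA (altPiece k c b) - k * v ≤ pieceVal vA (altPiece k c' b) :=
  ⟨inwardCuts G b c, hc.validCuts_inwardCuts h0 h1,
    fun _ ↦ inwardSeq_mem hG h0 h1 hc.extCuts_mem_Icc _,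
    hB.pieceVal_altPiece_bnot_le_inwardCuts hc h0 h1 b,
    sub_le_iff_le_add.2 (hA.pieceVal_altPiece_le_inwardCuts_add hc h0 h1 hcell b)⟩

lemma exists_grid_cuts_stackelbergValue (hA : IsNonnegDensity vA) (hB : IsNonnegDensity vB)
    (hone : pieceVal vB (Icc 0 1) = 1) (hG : G.Finite)
    (h0 : 0 ∈ G) (h1 : 1 ∈ G) (hcell : ∀ y ∈ Icc (0 : ℝ) 1, pieceVal vA (gridCell G y) ≤ v) :
    ∃ c : Fin k → ℝ, ValidCuts k c ∧ (∀ i, c i ∈ G) ∧ ∃ b,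
      1 / 2 ≤ pieceVal vB (altPiece k c (!b)) ∧
      stackelbergValue k vA vB - k * v ≤ pieceVal vA (altPiece k c b) := by
  let gridPairs : Set ((Fin k → ℝ) × Bool) :=
    {p | ValidCuts k p.1 ∧ (∀ i, p.1 i ∈ G) ∧ 1 / 2 ≤ pieceVal vB (altPiece k p.1 (!p.2))}
  have hfinite : gridPairs.Finite :=
    ((Finite.pi' fun _ ↦ hG).prod finite_univ).subset fun p hp ↦ ⟨hp.2.1, mem_univ p.2⟩
  have hzero : ValidCuts k fun _ ↦ 0 := ⟨monotone_const, fun _ ↦ by simp⟩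
  obtain ⟨b₀, hb₀⟩ := hB.exists_half_le_pieceVal hone hzero
  have hbest : ∃ u ∈ (fun p ↦ pieceVal vA (altPiece k p.1 p.2)) '' gridPairs,
      stackelbergValue k vA vB - k * v ≤ u := by
    refine exists_sSup_sub_le ⟨_, _, b₀, hzero, hb₀, rfl⟩ (hfinite.image _) ?_
    rintro _ ⟨c, b, hc, hbob, rfl⟩
    obtain ⟨c', hc', hc'G, hB', hA'⟩ := exists_grid_cuts hA hB hG h0 h1 hcell hc b
    exact ⟨_, ⟨(c', b), ⟨hc', hc'G, hbob.trans hB'⟩, rfl⟩, hA'⟩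
  obtain ⟨_, ⟨p, ⟨hp, hpG, hpB⟩, rfl⟩, hle⟩ := hbest
  exact ⟨p.1, hp, hpG, p.2, hpB, hle⟩

end Grid

theorem stackelberg_discretization_general (vA vB : ℝ → ℝ) (hA : IsNonnegDensity vA)
    (hB : IsNonnegDensity vB) (hone : pieceVal vB (Icc 0 1) = 1) (k n : ℕ) (hn : 2 ≤ n)
    (x : ℕ → ℝ) (hx1 : x 1 = 0) (hxn : x n = 1) (hmono : MonotoneOn x (Icc 1 n)) (v : ℝ)
    (hsmall : ∀ i, 1 ≤ i → i < n → pieceVal vA (Icc (x i) (x (i + 1))) ≤ v) :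
    (∀ c : Fin k → ℝ, ValidCuts k c → ∀ b : Bool,
      1 / 2 ≤ pieceVal vB (altPiece k c (!b)) →
      ∃ c' : Fin k → ℝ, ValidCuts k c' ∧
        (∀ i : Fin k, ∃ j, 1 ≤ j ∧ j ≤ n ∧ c' i = x j) ∧
        ∃ b' : Bool,
          1 / 2 ≤ pieceVal vB (altPiece k c' (!b')) ∧
          pieceVal vA (altPiece k c b) - k * v ≤ pieceVal vA (altPiece k c' b')) ∧
    (∃ c' : Fin k → ℝ, ValidCuts k c' ∧
      (∀ i : Fin k, ∃ j, 1 ≤ j ∧ j ≤ n ∧ c' i = x j) ∧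
      ∃ b' : Bool,
        1 / 2 ≤ pieceVal vB (altPiece k c' (!b')) ∧
        stackelbergValue k vA vB - k * v ≤ pieceVal vA (altPiece k c' b')) := by
  have h1mem : 1 ∈ Icc 1 n := ⟨le_rfl, by omega⟩
  have hnmem : n ∈ Icc 1 n := ⟨by omega, le_rfl⟩
  have hG : (x '' Icc 1 n).Finite := (finite_Icc 1 n).image x
  have h0 : 0 ∈ x '' Icc 1 n := ⟨1, h1mem, hx1⟩
  have h1 : 1 ∈ x '' Icc 1 n := ⟨n, hnmem, hxn⟩
  have hindex {y : ℝ} : y ∈ x '' Icc 1 n → ∃ j, 1 ≤ j ∧ j ≤ n ∧ y = x j :=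
    fun ⟨j, hj, hjy⟩ ↦ ⟨j, hj.1, hj.2, hjy.symm⟩
  have hcell : ∀ y ∈ Icc (0 : ℝ) 1, pieceVal vA (gridCell (x '' Icc 1 n) y) ≤ v := by
    intro y hy
    obtain ⟨i, hi, hin, hsub⟩ := exists_gridCell_subset_Icc_succ x hn (hx1 ▸ hxn ▸ hy)
    refine (hA.pieceVal_mono hsub (Icc_subset_Icc ?_ ?_)).trans (hsmall i hi hin)
    · exact hx1 ▸ hmono h1mem ⟨hi, hin.le⟩ hi
    · exact hxn ▸ hmono ⟨by omega, hin⟩ hnmem hin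
  refine ⟨fun c hc b hbob ↦ ?_, ?_⟩
  · obtain ⟨c', hc', hc'G, hB', hA'⟩ := exists_grid_cuts hA hB hG h0 h1 hcell hc b
    exact ⟨c', hc', fun i ↦ hindex (hc'G i), b, hbob.trans hB', hA'⟩
  · obtain ⟨c', hc', hc'G, hval⟩ := exists_grid_cuts_stackelbergValue hA hB hone hG h0 h1 hcell
    exact ⟨c', hc', fun i ↦ hindex (hc'G i), hval⟩

/-- discretization of Stackelberg cuts: given a grid
`0 = x₁ < x₂ < ⋯ < x_n = 1` whose consecutive intervals each have Alice-value at most `v`,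
every alternating `k`-cut partition `(Y_A, Y_B)` with `V_B(Y_B) ≥ 1/2` can be replaced by
one with all cut points on the grid, still giving Bob at least `1/2` and losing Alice at
most `k·v`; in particular some grid partition is `(k·v)`-Stackelberg. -/
theorem stackelberg_discretization (δ Δ : ℝ) (hδ : 0 < δ) (hδΔ : δ ≤ Δ)
    (vA vB : ℝ → ℝ) (hA : IsValueDensity δ Δ vA) (hB : IsValueDensity δ Δ vB)
    (k : ℕ) (hk : 1 ≤ k)
    (n : ℕ) (hn : 2 ≤ n) (x : ℕ → ℝ) (hx1 : x 1 = 0) (hxn : x n = 1)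
    (hmono : ∀ i, 1 ≤ i → i < n → x i < x (i + 1))
    (v : ℝ) (hv : 0 < v)
    (hsmall : ∀ i, 1 ≤ i → i < n → pieceVal vA (Set.Icc (x i) (x (i + 1))) ≤ v) :
    (∀ c : Fin k → ℝ, ValidCuts k c → ∀ b : Bool,
      1/2 ≤ pieceVal vB (altPiece k c (!b)) →
      ∃ c' : Fin k → ℝ, ValidCuts k c' ∧
        (∀ i : Fin k, ∃ j, 1 ≤ j ∧ j ≤ n ∧ c' i = x j) ∧
        ∃ b' : Bool,
          1/2 ≤ pieceVal vB (altPiece k c' (!b')) ∧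
          pieceVal vA (altPiece k c b) - k * v ≤ pieceVal vA (altPiece k c' b')) ∧
    (∃ c' : Fin k → ℝ, ValidCuts k c' ∧
      (∀ i : Fin k, ∃ j, 1 ≤ j ∧ j ≤ n ∧ c' i = x j) ∧
      ∃ b' : Bool,
        1/2 ≤ pieceVal vB (altPiece k c' (!b')) ∧
        stackelbergValue k vA vB - k * v ≤ pieceVal vA (altPiece k c' b')) := by
  exact stackelberg_discretization_general vA vB (hA.isNonnegDensity hδ.le)
    (hB.isNonnegDensity hδ.le) hB.2.2 k n hn x hx1 hxn
    (monotoneOn_of_le_add_one ordConnected_Icc fun i _ hi hi' ↦ (hmono i hi.1 hi'.2).le) v hsmall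

end
end
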